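/- Let K be an algebraically closed field of characteristic zero (e.g. K = ℂ). The base locus of the parametrization is at most zero-dimensional: the set of points ([s:u],[t:v]) ∈ ℙ¹(K) × ℙ¹(K) at which f₁, f₂, f₃ and f₄ all vanish is finite. Equivalently, the set of pairs ((s,u),(t,v)) ∈ (K²∖{0}) × (K²∖{0}) with f₁ = f₂ = f₃ = f₄ = 0, taken up to independent scaling of (s,u) and of (t,v), is finite. -/

import Mathlib

/-!
The base locus is in fact empty. The differences `f₂ - f₄` and `f₂ - f₃` are `2t` times forms
`p`, `q` that are quadratic in `(s,u)`, and the resultant of `p` and `q` with respect to `(s,u)`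
is `-v(t - v)^7`. At a base point neither `t` nor `v` is `0`: setting either to `0` leaves in `f₁`
and `f₂` only terms that force `s = u = 0`. So `p = q = 0` and hence `t = v`. There `p` becomes
`-2t²(s - u)²`, so `s = u`, and `f₁` becomes `58 s² t³`, which forces `s = u = 0` again. This is
`no_base_point`, and `resultant_mul_eq_zero` supplies the elimination of `(s,u)`.
-/

open MvPolynomial

section

variable (K : Type) [Field K]

/-- `X 0 = s`, `X 1 = u`, `X 2 = t`, `X 3 = v` in `K[s,u,t,v]`. -/
noncomputable def s : MvPolynomial (Fin 4) K := X 0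
noncomputable def u : MvPolynomial (Fin 4) K := X 1
noncomputable def t : MvPolynomial (Fin 4) K := X 2
noncomputable def v : MvPolynomial (Fin 4) K := X 3

/-- `f₁`, bihomogeneous of bidegree `(2,3)`. -/
noncomputable def f1 : MvPolynomial (Fin 4) K :=
  s K^2*t K^3 + 2*s K*u K*t K^3 + 3*u K^2*t K^3 + 4*s K^2*t K^2*v K + 5*s K*u K*t K^2*v K +
    6*u K^2*t K^2*v K + 7*s K^2*t K*v K^2 + 8*s K*u K*t K*v K^2 + 9*u K^2*t K*v K^2 +
    10*s K^2*v K^3 + s K*u K*v K^3 + 2*u K^2*v K^3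

/-- `f₂`, bihomogeneous of bidegree `(2,3)`. -/
noncomputable def f2 : MvPolynomial (Fin 4) K :=
  2*s K^2*t K^3 - 3*s K^2*t K^2*v K + s K*u K*t K^2*v K - 3*u K^2*t K^2*v K - s K^2*t K*v K^2 +
    3*s K*u K*t K*v K^2 + 2*u K^2*t K*v K^2 - u K^2*v K^3

/-- `f₃`, bihomogeneous of bidegree `(2,3)`. -/
noncomputable def f3 : MvPolynomial (Fin 4) K :=
  2*s K^2*t K^3 - 2*s K*u K*t K^3 - 3*s K^2*t K^2*v K + 5*s K*u K*t K^2*v K -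
    3*u K^2*t K^2*v K + s K^2*t K*v K^2 - 3*s K*u K*t K*v K^2 + 4*u K^2*t K*v K^2 - u K^2*v K^3

/-- `f₄`, bihomogeneous of bidegree `(2,3)`. -/
noncomputable def f4 : MvPolynomial (Fin 4) K :=
  -2*s K*u K*t K^3 + 3*s K^2*t K^2*v K + s K*u K*t K^2*v K - u K^2*t K^2*v K -
    s K^2*t K*v K^2 - 3*s K*u K*t K*v K^2 + 4*u K^2*t K*v K^2 - u K^2*v K^3

/-- The tuple `(f₁, f₂, f₃, f₄)`. -/
noncomputable def f : Fin 4 → MvPolynomial (Fin 4) K := ![f1 K, f2 K, f3 K, f4 K]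

end

/-- If two binary quadratic forms vanish at `(x,y)`, so does their Sylvester resultant times
`x^4`, and likewise times `y^4`. -/
lemma resultant_mul_eq_zero {K : Type} [Field K] {a b c a' b' c' x y : K}
    (h : a * x ^ 2 + b * (x * y) + c * y ^ 2 = 0)
    (h' : a' * x ^ 2 + b' * (x * y) + c' * y ^ 2 = 0) :
    ((c * a' - a * c') ^ 2 - (b * c' - c * b') * (a * b' - b * a')) * x ^ 4 = 0 ∧
      ((c * a' - a * c') ^ 2 - (b * c' - c * b') * (a * b' - b * a')) * y ^ 4 = 0 := by
  -- `(x², xy, y²)` is proportional to the cross product of the two coefficient vectors.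
  have e1 : (a * b' - b * a') * (x * y) = (c * a' - a * c') * y ^ 2 := by
    linear_combination a * h' - a' * h
  have e2 : (a * b' - b * a') * x ^ 2 = (b * c' - c * b') * y ^ 2 := by
    linear_combination b' * h - b * h'
  have e3 : (b * c' - c * b') * (x * y) = (c * a' - a * c') * x ^ 2 := by
    linear_combination c' * h - c * h'
  constructor
  · linear_combination
      -((c * a' - a * c') * x ^ 2 + (b * c' - c * b') * (x * y)) * e3
        - (b * c' - c * b') * x ^ 2 * e2
  · linear_combination
      -((c * a' - a * c') * y ^ 2 + (a * b' - b * a') * (x * y)) * e1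
        + (a * b' - b * a') * y ^ 2 * e2

/-- The four forms have no common zero with `(x,y) ≠ 0` and `(z,w) ≠ 0`; the coordinates stand
for `(s,u)` and `(t,v)`. -/
lemma no_base_point {K : Type} [Field K] [CharZero K] {x y z w : K}
    (hxy : ¬(x = 0 ∧ y = 0)) (hzw : ¬(z = 0 ∧ w = 0))
    (h1 : eval ![x, y, z, w] (f1 K) = 0) (h2 : eval ![x, y, z, w] (f2 K) = 0)
    (h3 : eval ![x, y, z, w] (f3 K) = 0) (h4 : eval ![x, y, z, w] (f4 K) = 0) : False := by
  simp [f1, s, u, t, v] at h1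
  simp [f2, s, u, t, v] at h2
  simp [f3, s, u, t, v] at h3
  simp [f4, s, u, t, v] at h4
  have hz : z ≠ 0 := by
    rintro rfl
    have hw : w ≠ 0 := fun hw => hzw ⟨rfl, hw⟩
    have hy : y = 0 := by simpa [hw] using h2
    subst hy
    exact hxy ⟨by simpa [hw] using h1, rfl⟩
  have h2z : 2 * z ≠ 0 := mul_ne_zero two_ne_zero hz
  have hp : (z ^ 2 - 3 * z * w) * x ^ 2 + (z ^ 2 + 3 * w ^ 2) * (x * y)
      + (-z * w - w ^ 2) * y ^ 2 = 0 :=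
    mul_left_cancel₀ h2z (by linear_combination h2 - h4)
  have hq : (-w ^ 2) * x ^ 2 + (z ^ 2 - 2 * z * w + 3 * w ^ 2) * (x * y)
      + (-w ^ 2) * y ^ 2 = 0 :=
    mul_left_cancel₀ h2z (by linear_combination h2 - h3)
  obtain ⟨rx, ry⟩ := resultant_mul_eq_zero hp hq
  have hpow : w * (z - w) ^ 7 = 0 := by
    by_cases hx : x = 0
    · have hy : y ^ 4 ≠ 0 := pow_ne_zero _ fun hy => hxy ⟨hx, hy⟩
      refine (mul_eq_zero.mp ?_).resolve_right hy
      linear_combination -ry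
    · refine (mul_eq_zero.mp ?_).resolve_right (pow_ne_zero 4 hx)
      linear_combination -rx
  have hw : w ≠ 0 := by
    rintro rfl
    have hx : x = 0 := by simpa [hz] using h2
    subst hx
    exact hxy ⟨rfl, by simpa [hz] using h1⟩
  have hzw' : z = w := by
    simpa [hw, sub_eq_zero] using hpow
  subst hzw'
  have hsq : (x - y) ^ 2 = 0 := by
    refine (mul_eq_zero.mp (?_ : (2 * z ^ 2) * (x - y) ^ 2 = 0)).resolve_left
      (mul_ne_zero two_ne_zero (pow_ne_zero 2 hz))
    linear_combination -hp
  have hxy' : x = y := sub_eq_zero.mp (pow_eq_zero_iff two_ne_zero |>.mp hsq)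
  subst hxy'
  have hx : 58 * (x ^ 2 * z ^ 3) = 0 := by linear_combination h1
  have hx0 : x = 0 := by simpa [hz] using hx
  exact hxy ⟨hx0, hx0⟩

/-- Let `K` be an algebraically closed field of characteristic zero. The base locus of the
parametrization is at most zero-dimensional: the set of points
`([s:u],[t:v]) ∈ ℙ¹(K) × ℙ¹(K)` — i.e. pairs of nonzero vectors of `K²` up to independent
scaling, realized as the type `Projectivization K (Fin 2 → K)` of lines — at which
`f₁, f₂, f₃, f₄` all vanish is finite. (Since each `fᵢ` is bihomogeneous, its vanishing
at the chosen representatives `q.1.rep`, `q.2.rep` is independent of the choice of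
representatives.) -/
theorem base_locus_finite (K : Type) [Field K] [IsAlgClosed K] [CharZero K] :
    {q : Projectivization K (Fin 2 → K) × Projectivization K (Fin 2 → K) |
        ∀ i : Fin 4,
          MvPolynomial.eval (![q.1.rep 0, q.1.rep 1, q.2.rep 0, q.2.rep 1]) (f K i) =
            0}.Finite := by
  convert Set.finite_empty
  refine Set.eq_empty_of_forall_notMem fun q hq => ?_
  have hrep : ∀ r : Projectivization K (Fin 2 → K), ¬(r.rep 0 = 0 ∧ r.rep 1 = 0) := by
    rintro r ⟨h0, h1⟩
    exact r.rep_nonzero (by ext i; fin_cases i <;> assumption)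
  exact no_base_point (hrep q.1) (hrep q.2) (hq 0) (hq 1) (hq 2) (hq 3)
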